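/- arXiv:1406.6665 — 4 statements merged into one kernel-verified Lean document; each statement's English description precedes it below -/
import Mathlib

section
/- Let a ≥ 1, s ≥ 0 be integers, let h^1, …, h^n ∈ Mat(N, ℂ) satisfy the Clifford relations for signature (p, q), let U ∈ Mat(N, ℂ), and fix ν ∈ {1,…,n} with h_ν = η_{νν} h^ν. Then F^s(F^a(U)·h_ν) = −F^{s+1}(F^{a−1}(U)·h_ν) + 2 F^s(h_ν·F^{a−1}(U)), and F^s(h_ν·F^a(U)) = −F^{s+1}(h_ν·F^{a−1}(U)) + 2 F^s(F^{a−1}(U)·h_ν). -/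
open Matrix

/-- The diagonal metric entries η^{μμ} of signature (p,q). -/
def etaC (p q : ℕ) (μ : Fin (p + q)) : ℂ := if (μ : ℕ) < p then 1 else -1

/-- The Clifford relations h^μ h^ν + h^ν h^μ = 2 η^{μν} I for signature (p,q). -/
def CliffRel (p q N : ℕ) (h : Fin (p + q) → Matrix (Fin N) (Fin N) ℂ) : Prop :=
  ∀ μ ν : Fin (p + q), h μ * h ν + h ν * h μ =
    (2 * if μ = ν then etaC p q μ else 0) • (1 : Matrix (Fin N) (Fin N) ℂ)

/-- The generator contraction F(U) = Σ_a η^{aa} h^a U h^a. -/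
noncomputable def gencon (p q N : ℕ) (h : Fin (p + q) → Matrix (Fin N) (Fin N) ℂ)
    (U : Matrix (Fin N) (Fin N) ℂ) : Matrix (Fin N) (Fin N) ℂ :=
  ∑ a : Fin (p + q), etaC p q a • (h a * U * h a)

theorem etaC_sq (p q : ℕ) (μ : Fin (p + q)) : etaC p q μ * etaC p q μ = 1 := by
  unfold etaC; split_ifs <;> norm_num

theorem gencon_lin (p q N : ℕ) (h : Fin (p + q) → Matrix (Fin N) (Fin N) ℂ)
    (X Y : Matrix (Fin N) (Fin N) ℂ) :
    gencon p q N h (-X + (2 : ℂ) • Y) = -gencon p q N h X + (2 : ℂ) • gencon p q N h Y := by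
  unfold gencon
  rw [Finset.smul_sum, ← Finset.sum_neg_distrib, ← Finset.sum_add_distrib]
  refine Finset.sum_congr rfl fun a _ => ?_
  rw [mul_add, add_mul, mul_neg, neg_mul, mul_smul_comm, smul_mul_assoc, smul_add, smul_neg,
    smul_comm (2 : ℂ)]

theorem gencon_iter_lin (p q N : ℕ) (h : Fin (p + q) → Matrix (Fin N) (Fin N) ℂ) (s : ℕ)
    (X Y : Matrix (Fin N) (Fin N) ℂ) :
    (gencon p q N h)^[s] (-X + (2 : ℂ) • Y)
      = -(gencon p q N h)^[s] X + (2 : ℂ) • (gencon p q N h)^[s] Y := by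
  induction s generalizing X Y with
  | zero => rfl
  | succ s ih => simp only [Function.iterate_succ_apply, gencon_lin, ih]

theorem gencon_smul (p q N : ℕ) (h : Fin (p + q) → Matrix (Fin N) (Fin N) ℂ) (c : ℂ)
    (X : Matrix (Fin N) (Fin N) ℂ) :
    gencon p q N h (c • X) = c • gencon p q N h X := by
  unfold gencon
  rw [Finset.smul_sum]
  refine Finset.sum_congr rfl fun a _ => ?_
  rw [mul_smul_comm, smul_mul_assoc, smul_comm c]

theorem gencon_right (p q N : ℕ) (h : Fin (p + q) → Matrix (Fin N) (Fin N) ℂ)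
    (hcl : CliffRel p q N h) (V : Matrix (Fin N) (Fin N) ℂ) (ν : Fin (p + q)) :
    gencon p q N h V * h ν = -gencon p q N h (V * h ν) + (2 : ℂ) • (h ν * V) := by
  rw [eq_neg_add_iff_add_eq, add_comm]
  unfold gencon
  rw [Finset.sum_mul, ← Finset.sum_add_distrib, Finset.sum_eq_single ν]
  · have e := hcl ν ν
    have e2 : etaC p q ν • (h ν * V * (h ν * h ν + h ν * h ν)) = (2 : ℂ) • (h ν * V) := by
      rw [e, mul_smul_comm, mul_one, smul_smul, if_pos rfl, mul_left_comm, etaC_sq, mul_one]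
    rw [← e2]
    simp only [mul_add, smul_add, smul_mul_assoc, mul_assoc]
  · intro b _ hb
    have e := hcl b ν
    rw [if_neg hb, mul_zero, zero_smul] at e
    have e2 : etaC p q b • (h b * V * (h b * h ν + h ν * h b)) = 0 := by
      rw [e, mul_zero, smul_zero]
    rw [← e2]
    simp only [mul_add, smul_add, smul_mul_assoc, mul_assoc]
  · intro hh; exact absurd (Finset.mem_univ _) hh

theorem gencon_left (p q N : ℕ) (h : Fin (p + q) → Matrix (Fin N) (Fin N) ℂ)
    (hcl : CliffRel p q N h) (V : Matrix (Fin N) (Fin N) ℂ) (ν : Fin (p + q)) :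
    h ν * gencon p q N h V = -gencon p q N h (h ν * V) + (2 : ℂ) • (V * h ν) := by
  rw [eq_neg_add_iff_add_eq, add_comm]
  unfold gencon
  rw [Finset.mul_sum, ← Finset.sum_add_distrib, Finset.sum_eq_single ν]
  · have e := hcl ν ν
    have e2 : etaC p q ν • ((h ν * h ν + h ν * h ν) * (V * h ν)) = (2 : ℂ) • (V * h ν) := by
      rw [e, smul_mul_assoc, one_mul, smul_smul, if_pos rfl, mul_left_comm, etaC_sq, mul_one]
    rw [← e2]
    simp only [add_mul, smul_add, mul_smul_comm, mul_assoc]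
  · intro b _ hb
    have e := hcl b ν
    rw [if_neg hb, mul_zero, zero_smul, add_comm] at e
    have e2 : etaC p q b • ((h ν * h b + h b * h ν) * (V * h b)) = 0 := by
      rw [e, zero_mul, smul_zero]
    rw [← e2]
    simp only [add_mul, smul_add, mul_smul_comm, mul_assoc]
  · intro hh; exact absurd (Finset.mem_univ _) hh

/-- with h_ν = η_{νν} h^ν, for a ≥ 1 and s ≥ 0 one has
F^s(F^a(U)·h_ν) = −F^{s+1}(F^{a−1}(U)·h_ν) + 2 F^s(h_ν·F^{a−1}(U)) and
F^s(h_ν·F^a(U)) = −F^{s+1}(h_ν·F^{a−1}(U)) + 2 F^s(F^{a−1}(U)·h_ν). -/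
theorem contraction_recursion
    (p q N : ℕ) (hN : 1 ≤ N)
    (h : Fin (p + q) → Matrix (Fin N) (Fin N) ℂ)
    (hcl : CliffRel p q N h)
    (U : Matrix (Fin N) (Fin N) ℂ) (ν : Fin (p + q))
    (a s : ℕ) (ha : 1 ≤ a) :
    (gencon p q N h)^[s] ((gencon p q N h)^[a] U * (etaC p q ν • h ν)) =
      -((gencon p q N h)^[s + 1] ((gencon p q N h)^[a - 1] U * (etaC p q ν • h ν)))
        + (2 : ℂ) • (gencon p q N h)^[s] ((etaC p q ν • h ν) * (gencon p q N h)^[a - 1] U)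
    ∧
    (gencon p q N h)^[s] ((etaC p q ν • h ν) * (gencon p q N h)^[a] U) =
      -((gencon p q N h)^[s + 1] ((etaC p q ν • h ν) * (gencon p q N h)^[a - 1] U))
        + (2 : ℂ) • (gencon p q N h)^[s] ((gencon p q N h)^[a - 1] U * (etaC p q ν • h ν)) := by
  obtain ⟨b, rfl⟩ : ∃ b, a = b + 1 := ⟨a - 1, by omega⟩
  rw [Nat.add_sub_cancel, Function.iterate_succ_apply' _ b, Function.iterate_succ_apply _ s,
    Function.iterate_succ_apply _ s]
  generalize (gencon p q N h)^[b] U = V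
  rw [← gencon_iter_lin, ← gencon_iter_lin]
  constructor
  · congr 1
    rw [mul_smul_comm, gencon_right p q N h hcl, mul_smul_comm, gencon_smul, smul_mul_assoc,
      smul_add, smul_neg, smul_comm (2 : ℂ)]
  · congr 1
    rw [smul_mul_assoc, gencon_left p q N h hcl, smul_mul_assoc, gencon_smul, mul_smul_comm,
      smul_add, smul_neg, smul_comm (2 : ℂ)]
end

section
/- Let h^μ : ℝⁿ → Mat(N, ℂ) (μ = 1,…,n) be twice continuously differentiable and satisfy the Clifford relations at every point, and let C_μ : ℝⁿ → Mat(N, ℂ) (μ = 1,…,n) be continuously differentiable with tr C_μ(x) = 0 for all μ, x. Assume the primitive field equation ∂_μ h^ν − [C_μ, h^ν] = 0 holds for all μ, ν, and assume that for every x ∈ ℝⁿ the only matrices commuting with h^ν(x) for all ν = 1,…,n are the scalar multiples of the identity. Then ∂_μ C_ν − ∂_ν C_μ − [C_μ, C_ν] = 0 for all μ, ν = 1, …, n. -/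
open Matrix

attribute [local instance] Matrix.normedAddCommGroup Matrix.normedSpace

/-- The partial derivative ∂_μ of a matrix-valued function on ℝⁿ. -/
noncomputable def pder {n N : ℕ} (μ : Fin n)
    (f : (Fin n → ℝ) → Matrix (Fin N) (Fin N) ℂ) (x : Fin n → ℝ) :
    Matrix (Fin N) (Fin N) ℂ :=
  fderiv ℝ f x (Pi.single μ 1)

/-- Matrix multiplication as a continuous bilinear map. -/
noncomputable def mulCLM (N : ℕ) : Matrix (Fin N) (Fin N) ℂ →L[ℝ]
    Matrix (Fin N) (Fin N) ℂ →L[ℝ] Matrix (Fin N) (Fin N) ℂ :=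
  LinearMap.toContinuousLinearMap
    ((LinearMap.toContinuousLinearMap :
      (Matrix (Fin N) (Fin N) ℂ →ₗ[ℝ] Matrix (Fin N) (Fin N) ℂ) ≃ₗ[ℝ] _).toLinearMap ∘ₗ
      LinearMap.mul ℝ (Matrix (Fin N) (Fin N) ℂ))

theorem mulCLM_apply (N : ℕ) (A B : Matrix (Fin N) (Fin N) ℂ) : mulCLM N A B = A * B := rfl

theorem diff_mul {n N : ℕ} {f g : (Fin n → ℝ) → Matrix (Fin N) (Fin N) ℂ}
    (hf : Differentiable ℝ f) (hg : Differentiable ℝ g) :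
    Differentiable ℝ (fun y => f y * g y) := fun x =>
  ((mulCLM N).hasFDerivAt_of_bilinear (hf x).hasFDerivAt (hg x).hasFDerivAt).differentiableAt

theorem pder_mul {n N : ℕ} (μ : Fin n) {f g : (Fin n → ℝ) → Matrix (Fin N) (Fin N) ℂ}
    (hf : Differentiable ℝ f) (hg : Differentiable ℝ g) (x : Fin n → ℝ) :
    pder μ (fun y => f y * g y) x = pder μ f x * g x + f x * pder μ g x := by
  have := ((mulCLM N).hasFDerivAt_of_bilinear (hf x).hasFDerivAt (hg x).hasFDerivAt).fderiv
  have h3 := congrArg (fun L => L (Pi.single μ 1)) this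
  rw [add_comm]
  exact h3

theorem pder_sub {n N : ℕ} (μ : Fin n) {f g : (Fin n → ℝ) → Matrix (Fin N) (Fin N) ℂ}
    (hf : Differentiable ℝ f) (hg : Differentiable ℝ g) (x : Fin n → ℝ) :
    pder μ (fun y => f y - g y) x = pder μ f x - pder μ g x := by
  exact congrArg (fun L => L (Pi.single μ 1)) (fderiv_fun_sub (hf x) (hg x))

theorem snd_comm {E F : Type*} [NormedAddCommGroup E] [NormedSpace ℝ E]
    [NormedAddCommGroup F] [NormedSpace ℝ F] {f : E → F}
    (hf : ContDiff ℝ 2 f) (x u v : E) :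
    fderiv ℝ (fun y => fderiv ℝ f y v) x u = fderiv ℝ (fun y => fderiv ℝ f y u) x v := by
  have hs : IsSymmSndFDerivAt ℝ f x := hf.contDiffAt.isSymmSndFDerivAt (by simp)
  have hd : DifferentiableAt ℝ (fderiv ℝ f) x :=
    ((hf.fderiv_right (m := 1) (by norm_num)).differentiable (by norm_num)) x
  have key : ∀ a b : E, fderiv ℝ (fun y => fderiv ℝ f y b) x a
      = fderiv ℝ (fderiv ℝ f) x a b := by
    intro a b
    rw [fderiv_clm_apply hd (differentiableAt_const _)]
    simp
  rw [key, key]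
  exact hs _ _

theorem pder_comm {n N : ℕ} (μ ν : Fin n) {f : (Fin n → ℝ) → Matrix (Fin N) (Fin N) ℂ}
    (hf : ContDiff ℝ 2 f) (x : Fin n → ℝ) :
    pder μ (fun y => pder ν f y) x = pder ν (fun y => pder μ f y) x :=
  snd_comm hf x (Pi.single μ 1) (Pi.single ν 1)

theorem trace_pder {n N : ℕ} (μ : Fin n) {f : (Fin n → ℝ) → Matrix (Fin N) (Fin N) ℂ}
    (hf : Differentiable ℝ f) (h0 : ∀ x, (f x).trace = 0) (x : Fin n → ℝ) :
    (pder μ f x).trace = 0 := by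
  let T : Matrix (Fin N) (Fin N) ℂ →L[ℝ] ℂ :=
    LinearMap.toContinuousLinearMap (Matrix.traceLinearMap (Fin N) ℝ ℂ)
  have h1 := (T.hasFDerivAt.comp x (hf x).hasFDerivAt).fderiv
  have h2 : (T ∘ f) = fun _ => (0 : ℂ) := funext h0
  rw [h2] at h1
  have h3 := congrArg (fun L => L (Pi.single μ 1)) h1
  simp only [fderiv_fun_const] at h3
  exact h3.symm

/-- if h^μ (C²) satisfy the Clifford relations pointwise, the C_μ
are C¹ and traceless, the primitive field equation ∂_μ h^ν − [C_μ, h^ν] = 0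
holds, and at each point the only matrices commuting with all h^ν(x) are the
scalar matrices, then ∂_μ C_ν − ∂_ν C_μ − [C_μ, C_ν] = 0. -/
theorem zero_curvature_of_primitive_equation
    (p q N : ℕ) (hpq : 1 ≤ p + q) (hN : 1 ≤ N)
    (h C : Fin (p + q) → (Fin (p + q) → ℝ) → Matrix (Fin N) (Fin N) ℂ)
    (hh : ∀ μ, ContDiff ℝ 2 (h μ))
    (hC : ∀ μ, ContDiff ℝ 1 (C μ))
    (hCtr : ∀ μ x, (C μ x).trace = 0)
    (hcl : ∀ x, CliffRel p q N (fun μ => h μ x))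
    (hprim : ∀ μ ν x, pder μ (h ν) x - (C μ x * h ν x - h ν x * C μ x) = 0)
    (hcomm : ∀ x (A : Matrix (Fin N) (Fin N) ℂ),
      (∀ ν, A * h ν x = h ν x * A) → ∃ c : ℂ, A = c • (1 : Matrix (Fin N) (Fin N) ℂ)) :
    ∀ μ ν x,
      pder μ (C ν) x - pder ν (C μ) x - (C μ x * C ν x - C ν x * C μ x) = 0 := by
  intro μ ν x
  have dC : ∀ a, Differentiable ℝ (C a) := fun a => (hC a).differentiable (by norm_num)
  have dh : ∀ a, Differentiable ℝ (h a) := fun a => (hh a).differentiable (by norm_num)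
  have hp : ∀ a b, ∀ y, pder a (h b) y = C a y * h b y - h b y * C a y :=
    fun a b y => sub_eq_zero.mp (hprim a b y)
  have h2 : ∀ a b k, pder a (fun y => pder b (h k) y) x =
      (pder a (C b) x * h k x + C b x * (C a x * h k x - h k x * C a x))
      - ((C a x * h k x - h k x * C a x) * C b x + h k x * pder a (C b) x) := by
    intro a b k
    simp only [hp b k]
    rw [pder_sub a (diff_mul (dC b) (dh k)) (diff_mul (dh k) (dC b)),
      pder_mul a (dC b) (dh k), pder_mul a (dh k) (dC b), hp a k]
  obtain ⟨c, hc⟩ := hcomm x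
    (pder μ (C ν) x - pder ν (C μ) x - (C μ x * C ν x - C ν x * C μ x)) (by
      intro k
      have := pder_comm μ ν (hh k) x
      rw [h2, h2] at this
      rw [← sub_eq_zero] at this ⊢
      rw [← this]
      noncomm_ring)
  have ht := congrArg Matrix.trace hc
  rw [Matrix.trace_sub, Matrix.trace_sub, Matrix.trace_sub, trace_pder μ (dC ν) (hCtr ν),
    trace_pder ν (dC μ) (hCtr μ), Matrix.trace_mul_comm (C μ x), Matrix.trace_smul,
    Matrix.trace_one] at ht
  have hN' : (N : ℂ) ≠ 0 := by exact_mod_cast (by omega : N ≠ 0)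
  have hc0 : c = 0 := by
    simpa [hN'] using ht.symm
  rw [hc, hc0, zero_smul]
end

section
/- Let h^μ : ℝⁿ → Mat(N, ℂ) (μ = 1,…,n) be continuously differentiable and satisfy the Clifford relations at every point, and let C_μ : ℝⁿ → Mat(N, ℂ) satisfy the primitive field equation ∂_μ h_ρ − [C_μ, h_ρ] = 0 for all μ, ρ. Then for every μ and every x ∈ ℝⁿ: n·C_μ(x) − Σ_{ρ=1}^n η_{ρρ} h^ρ(x) C_μ(x) h^ρ(x) = Σ_{ρ=1}^n η_{ρρ} (∂_μ h^ρ)(x) h^ρ(x). -/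
open Matrix

attribute [local instance] Matrix.normedAddCommGroup Matrix.normedSpace

/-- if the primitive field equation ∂_μ h_ρ − [C_μ, h_ρ] = 0
holds (h_ρ = η_{ρρ} h^ρ), then
n·C_μ − Σ_ρ η_{ρρ} h^ρ C_μ h^ρ = Σ_ρ η_{ρρ} (∂_μ h^ρ) h^ρ. -/
theorem contraction_equation_for_C
    (p q N : ℕ) (hpq : 1 ≤ p + q) (hN : 1 ≤ N)
    (h C : Fin (p + q) → (Fin (p + q) → ℝ) → Matrix (Fin N) (Fin N) ℂ)
    (hdiff : ∀ μ, ContDiff ℝ 1 (h μ))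
    (hcl : ∀ x, CliffRel p q N (fun μ => h μ x))
    (hprim : ∀ μ ρ x,
      pder μ (fun y => etaC p q ρ • h ρ y) x -
        (C μ x * (etaC p q ρ • h ρ x) - (etaC p q ρ • h ρ x) * C μ x) = 0) :
    ∀ μ x,
      ((p + q : ℕ) : ℂ) • C μ x -
        ∑ ρ : Fin (p + q), etaC p q ρ • (h ρ x * C μ x * h ρ x) =
      ∑ ρ : Fin (p + q), etaC p q ρ • (pder μ (h ρ) x * h ρ x) := by
  intro μ x
  have hD : ∀ ρ, pder μ (h ρ) x = C μ x * h ρ x - h ρ x * C μ x := by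
    intro ρ
    have e := hprim μ ρ x
    unfold pder at e ⊢
    rcases lt_or_ge (ρ : ℕ) p with hp | hp
    · have he : etaC p q ρ = 1 := by simp [etaC, hp]
      simp only [he, one_smul] at e
      exact sub_eq_zero.mp e
    · have he : etaC p q ρ = -1 := by simp [etaC, not_lt.mpr hp]
      simp only [he, neg_smul, one_smul] at e
      have hneg : fderiv ℝ (fun y => -h ρ y) x (Pi.single μ 1) =
          -(fderiv ℝ (h ρ) x (Pi.single μ 1)) :=
        congrArg (fun L => L (Pi.single μ 1)) (fderiv_fun_neg (𝕜 := ℝ) (f := h ρ) (x := x))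
      rw [hneg] at e
      have e2 := sub_eq_zero.mp e
      rw [neg_eq_iff_eq_neg] at e2
      rw [e2]
      noncomm_ring
  have hsq : ∀ ρ, etaC p q ρ • (h ρ x * h ρ x) = 1 := by
    intro ρ
    have e := hcl x ρ ρ
    simp only [if_true] at e
    have e1 : h ρ x * h ρ x = etaC p q ρ • (1 : Matrix (Fin N) (Fin N) ℂ) := by
      rw [← two_smul ℂ (h ρ x * h ρ x), mul_smul] at e
      exact smul_right_injective _ (two_ne_zero (α := ℂ)) e
    rw [e1, smul_smul]
    have : etaC p q ρ * etaC p q ρ = 1 := by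
      unfold etaC; split_ifs <;> norm_num
    rw [this, one_smul]
  have key : ∀ ρ, etaC p q ρ • (pder μ (h ρ) x * h ρ x) =
      C μ x - etaC p q ρ • (h ρ x * C μ x * h ρ x) := by
    intro ρ
    rw [hD, sub_mul, smul_sub, mul_assoc (C μ x), ← mul_smul_comm, hsq, mul_one]
  simp only [key, Finset.sum_sub_distrib, Finset.sum_const, Finset.card_univ, Fintype.card_fin]
  rw [Nat.cast_smul_eq_nsmul]
end

section
/- Let n = p + q ≥ 2 be even and N = 2^{n/2}. Let h^μ : ℝⁿ → Mat(N, ℂ) (μ = 1,…,n) be continuously differentiable and satisfy the Clifford relations at every point, and let C_μ : ℝⁿ → Mat(N, ℂ) satisfy tr C_μ(x) = 0 for all μ, x and the primitive field equation ∂_μ h_ρ − [C_μ, h_ρ] = 0 for all μ, ρ. Set λ_k = (−1)^k (n − 2k), let b_{kl} be the entries of the inverse of the (n+1)×(n+1) Vandermonde matrix A with A_{kl} = (λ_l)^k, and let r_l = Σ_{k=1}^{n} b_{kl}/(n − λ_k). Then for every μ and x: C_μ(x) = Σ_{l=0}^{n} r_l F^l(W_μ(x)), where W_μ(x) = Σ_{ρ=1}^n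 η_{ρρ} (∂_μ h^ρ)(x) h^ρ(x) and F is the generator contraction built from h^1(x),…,h^n(x). -/
open Matrix

attribute [local instance] Matrix.normedAddCommGroup Matrix.normedSpace

/-- λ_k = (−1)^k (n − 2k). -/
def lam (n k : ℕ) : ℤ := (-1) ^ k * ((n : ℤ) - 2 * (k : ℤ))

/-- The (n+1)×(n+1) Vandermonde matrix A_{kl} = (λ_l)^k over ℂ. -/
noncomputable def vand (n : ℕ) : Matrix (Fin (n + 1)) (Fin (n + 1)) ℂ :=
  Matrix.of fun k l : Fin (n + 1) => ((lam n (l : ℕ) : ℂ)) ^ (k : ℕ)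

/-- r_l = Σ_{k=1}^{n} b_{kl}/(n − λ_k), where b = A⁻¹. -/
noncomputable def rcoef (n : ℕ) (l : Fin (n + 1)) : ℂ :=
  ∑ k ∈ Finset.Ioi (0 : Fin (n + 1)),
    (vand n)⁻¹ k l / ((n : ℂ) - (lam n (k : ℕ) : ℂ))

/-- W_μ(x) = Σ_ρ η_{ρρ} (∂_μ h^ρ)(x) h^ρ(x). -/
noncomputable def Wfun (p q N : ℕ)
    (h : Fin (p + q) → (Fin (p + q) → ℝ) → Matrix (Fin N) (Fin N) ℂ)
    (μ : Fin (p + q)) (x : Fin (p + q) → ℝ) : Matrix (Fin N) (Fin N) ℂ :=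
  ∑ ρ : Fin (p + q), etaC p q ρ • (pder μ (h ρ) x * h ρ x)

/-- C_μ(x) = Σ_{l=0}^{n} r_l F^l(W_μ(x)). -/
noncomputable def Cformula (p q N : ℕ)
    (h : Fin (p + q) → (Fin (p + q) → ℝ) → Matrix (Fin N) (Fin N) ℂ)
    (μ : Fin (p + q)) (x : Fin (p + q) → ℝ) : Matrix (Fin N) (Fin N) ℂ :=
  ∑ l : Fin (p + q + 1),
    rcoef (p + q) l •
      (gencon p q N (fun a => h a x))^[(l : ℕ)] (Wfun p q N h μ x)

namespace PrimAux

lemma etaC_sq (p q : ℕ) (a : Fin (p + q)) : etaC p q a * etaC p q a = 1 := by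
  unfold etaC; split_ifs <;> norm_num

section
variable {p q N : ℕ} {g : Fin (p + q) → Matrix (Fin N) (Fin N) ℂ}

lemma g_sq (hg : CliffRel p q N g) (a : Fin (p + q)) : g a * g a = etaC p q a • 1 := by
  have h1 := hg a a
  rw [if_pos rfl, mul_smul, ← two_smul ℂ (g a * g a)] at h1
  exact smul_right_injective _ (two_ne_zero : (2 : ℂ) ≠ 0) h1

lemma g_anti (hg : CliffRel p q N g) {a b : Fin (p + q)} (hab : a ≠ b) :
    g a * g b = - (g b * g a) := by
  have h1 := hg a b
  rw [if_neg hab, mul_zero, zero_smul] at h1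
  exact eq_neg_of_add_eq_zero_left h1

/-- The sign attached to a list. -/
noncomputable def lsign (l : List (Fin (p + q))) (a : Fin (p + q)) : ℂ :=
  (-1) ^ l.length * (-1) ^ l.count a

lemma g_comm_prod (hg : CliffRel p q N g) (a : Fin (p + q)) (l : List (Fin (p + q))) :
    g a * (l.map g).prod = lsign l a • ((l.map g).prod * g a) := by
  induction l with
  | nil => simp [lsign]
  | cons b l ih =>
    by_cases hab : a = b
    · subst hab
      have : lsign (a :: l) a = lsign l a := by simp [lsign]; ring
      rw [this, List.map_cons, List.prod_cons, mul_assoc,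
        ← mul_smul_comm, ← ih]
    · have : lsign (b :: l) a = - lsign l a := by
        simp [lsign, Ne.symm hab]; ring
      rw [this, List.map_cons, List.prod_cons, ← mul_assoc, g_anti hg hab, neg_mul, mul_assoc, ih]
      simp [mul_assoc]

lemma prod_ne_zero [NeZero N] (hg : CliffRel p q N g) (l : List (Fin (p + q))) :
    (l.map g).prod ≠ 0 := by
  have hu : IsUnit (l.map g).prod := by
    induction l with
    | nil => simp
    | cons b l ih =>
      rw [List.map_cons, List.prod_cons]
      refine IsUnit.mul ?_ ih
      refine IsUnit.of_mul_eq_one (etaC p q b • g b) ?_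
      rw [mul_smul_comm, g_sq hg, smul_smul, etaC_sq, one_smul]
  have : Nonempty (Fin N) := ⟨0⟩
  exact hu.ne_zero

/-- The operator `U ↦ η h U h`. -/
noncomputable def T (g : Fin (p + q) → Matrix (Fin N) (Fin N) ℂ) (a : Fin (p + q)) :
    Module.End ℂ (Matrix (Fin N) (Fin N) ℂ) :=
  etaC p q a • (LinearMap.mulLeft ℂ (g a) ∘ₗ LinearMap.mulRight ℂ (g a))

lemma T_apply (a : Fin (p + q)) (U : Matrix (Fin N) (Fin N) ℂ) :
    T g a U = etaC p q a • (g a * U * g a) := by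
  simp [T, mul_assoc]

lemma T_comm (hg : CliffRel p q N g) (a b : Fin (p + q)) : Commute (T g a) (T g b) := by
  by_cases hab : a = b
  · rw [hab]
  · apply LinearMap.ext
    intro U
    simp only [Module.End.mul_apply, T_apply, mul_smul_comm, smul_mul_assoc]
    rw [smul_comm]
    congr 2
    calc g a * (g b * U * g b) * g a = (g a * g b) * U * (g b * g a) := by noncomm_ring
      _ = (g b * g a) * U * (g a * g b) := by
        rw [g_anti hg hab]; noncomm_ring
      _ = _ := by noncomm_ring

lemma T_prod (hg : CliffRel p q N g) (a : Fin (p + q)) (l : List (Fin (p + q))) :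
    T g a (l.map g).prod = lsign l a • (l.map g).prod := by
  rw [T_apply, g_comm_prod hg, smul_mul_assoc, mul_assoc, g_sq hg, mul_smul_comm, mul_one,
    smul_comm, smul_smul (etaC p q a), etaC_sq, one_smul]

lemma T_trace (hg : CliffRel p q N g) (a : Fin (p + q)) (U : Matrix (Fin N) (Fin N) ℂ) :
    (T g a U).trace = U.trace := by
  rw [T_apply, Matrix.trace_smul, Matrix.trace_mul_comm, ← mul_assoc, g_sq hg, smul_mul_assoc,
    one_mul, Matrix.trace_smul, smul_smul, etaC_sq, one_smul]

lemma gencon_eq (U : Matrix (Fin N) (Fin N) ℂ) :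
    gencon p q N g U = (∑ a, T g a) U := by
  simp [gencon, T_apply, LinearMap.sum_apply]

/-- The Clifford monomials. -/
noncomputable def mon (g : Fin (p + q) → Matrix (Fin N) (Fin N) ℂ) (S : Finset (Fin (p + q))) :
    Matrix (Fin N) (Fin N) ℂ := (S.toList.map g).prod

lemma lsign_toList (S : Finset (Fin (p + q))) (a : Fin (p + q)) :
    lsign S.toList a = (-1) ^ S.card * (if a ∈ S then -1 else 1) := by
  unfold lsign
  rw [Finset.length_toList, List.Nodup.count S.nodup_toList]
  simp only [Finset.mem_toList]
  split_ifs <;> simp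

lemma sign_sum (S : Finset (Fin (p + q))) :
    ∑ a, lsign S.toList a = (lam (p + q) S.card : ℂ) := by
  simp only [lsign_toList]
  rw [← Finset.mul_sum]
  have : ∀ a, (if a ∈ S then (-1 : ℂ) else 1) = 1 - 2 * (if a ∈ S then 1 else 0) := by
    intro a; split_ifs <;> norm_num
  simp only [this]
  rw [Finset.sum_sub_distrib, ← Finset.mul_sum]
  simp [lam]

lemma gencon_mon (hg : CliffRel p q N g) (S : Finset (Fin (p + q))) :
    (∑ a, T g a) (mon g S) = (lam (p + q) S.card : ℂ) • mon g S := by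
  rw [← sign_sum, LinearMap.sum_apply, Finset.sum_smul]
  exact Finset.sum_congr rfl fun a _ => T_prod hg a _

lemma sign_inj (hn : 2 ≤ p + q) (heven : Even (p + q)) :
    Function.Injective (fun S : Finset (Fin (p + q)) => lsign S.toList) := by
  intro S S' h
  have h' : ∀ a, ((-1 : ℂ)) ^ S.card * (if a ∈ S then -1 else 1)
      = (-1) ^ S'.card * (if a ∈ S' then -1 else 1) := fun a => by
    rw [← lsign_toList, ← lsign_toList]; exact congrFun h a
  by_cases hpar : ((-1 : ℂ)) ^ S.card = (-1) ^ S'.card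
  · ext a
    have h1 := h' a
    rw [hpar] at h1
    have h2 := mul_left_cancel₀ (pow_ne_zero _ (by norm_num)) h1
    by_cases h3 : a ∈ S <;> by_cases h4 : a ∈ S' <;> simp [h3, h4] at h2 ⊢ <;> norm_num at h2
  · exfalso
    apply hpar
    have hc : S' = Sᶜ := by
      ext a
      have h1 := h' a
      rw [Finset.mem_compl]
      by_cases h3 : a ∈ S <;> by_cases h4 : a ∈ S' <;> simp [h3, h4] at h1 ⊢ <;>
        exact hpar h1
    rw [hc]
    have hcard : S.card + Sᶜ.card = p + q := by simp [Finset.card_add_card_compl]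
    have he : ((-1 : ℂ)) ^ S.card * (-1) ^ Sᶜ.card = 1 := by
      rw [← pow_add, hcard, heven.neg_one_pow]
    rcases neg_one_pow_eq_or ℂ S.card with h1 | h1 <;>
    rcases neg_one_pow_eq_or ℂ Sᶜ.card with h2 | h2 <;> rw [h1, h2] at he ⊢ <;> norm_num at he

lemma mon_linInd [NeZero N] (hn : 2 ≤ p + q) (heven : Even (p + q)) (hg : CliffRel p q N g) :
    LinearIndependent ℂ (mon g) := by
  have h1 := Module.End.independent_iInf_maxGenEigenspace_of_forall_mapsTo (T g)
    (fun i j φ => Module.End.mapsTo_maxGenEigenspace_of_comm (T_comm hg j i) φ)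
  have h2 := h1.comp (sign_inj hn heven)
  refine iSupIndep.linearIndependent _ h2 (fun S => ?_) (fun S => prod_ne_zero hg _)
  simp only [Function.comp, Submodule.mem_iInf]
  intro a
  have : mon g S ∈ (T g a).eigenspace (lsign S.toList a) :=
    Module.End.mem_eigenspace_iff.2 (T_prod hg a _)
  exact Module.End.genEigenspace (T g a) (lsign S.toList a) |>.monotone le_top this

lemma mon_trace (hn : 2 ≤ p + q) (heven : Even (p + q)) (hg : CliffRel p q N g)
    (S : Finset (Fin (p + q))) (hS : S ≠ ∅) : (mon g S).trace = 0 := by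
  have : ∃ a, lsign S.toList a ≠ 1 := by
    by_contra! hcon
    apply hS
    apply sign_inj hn heven
    funext a
    simp only [hcon a]
    simp [lsign]
  obtain ⟨a, ha⟩ := this
  have h1 := T_trace hg a (mon g S)
  rw [show T g a (mon g S) = _ from T_prod hg a _, Matrix.trace_smul, smul_eq_mul] at h1
  have h2 : (lsign S.toList a - 1) * (mon g S).trace = 0 := by
    rw [sub_mul, one_mul, sub_eq_zero]; exact h1
  exact (mul_eq_zero.1 h2).resolve_left (sub_ne_zero.2 ha)

end

lemma lam_inj (n : ℕ) (heven : Even n) :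
    Function.Injective (fun k : Fin (n + 1) => (lam n (k : ℕ) : ℂ)) := by
  intro j k h
  have h' : lam n j = lam n k := by
    simp only at h
    exact_mod_cast h
  obtain ⟨m, rfl⟩ := heven
  unfold lam at h'
  ext
  rcases Nat.even_or_odd (j : ℕ) with h1 | h1 <;> rcases Nat.even_or_odd (k : ℕ) with h2 | h2 <;>
    rw [h1.neg_one_pow, h2.neg_one_pow] at h' <;> obtain ⟨a, ha⟩ := h1 <;>
    obtain ⟨b, hb⟩ := h2 <;> push_cast at h' <;> omega

lemma rcoef_sum (n : ℕ) (heven : Even n) (j : Fin (n + 1)) (hj : j ≠ 0) :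
    (∑ l : Fin (n + 1), rcoef n l * (lam n (j : ℕ) : ℂ) ^ (l : ℕ)) *
      ((n : ℂ) - (lam n (j : ℕ) : ℂ)) = 1 := by
  have hdet : IsUnit (vand n).det := by
    have : vand n = (Matrix.vandermonde fun k : Fin (n + 1) => (lam n (k : ℕ) : ℂ))ᵀ := by
      ext; simp [vand, Matrix.vandermonde]
    rw [this, Matrix.det_transpose, isUnit_iff_ne_zero, Matrix.det_vandermonde_ne_zero_iff]
    exact lam_inj n heven
  have hinv := Matrix.nonsing_inv_mul _ hdet
  have hne : (n : ℂ) - (lam n (j : ℕ) : ℂ) ≠ 0 := by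
    intro h0
    apply hj
    apply lam_inj n heven
    simp only
    rw [← sub_eq_zero.1 h0]
    simp [lam]
  have : ∑ l : Fin (n + 1), rcoef n l * (lam n (j : ℕ) : ℂ) ^ (l : ℕ)
      = ∑ k ∈ Finset.Ioi (0 : Fin (n + 1)),
        (1 : Matrix (Fin (n + 1)) (Fin (n + 1)) ℂ) k j / ((n : ℂ) - (lam n (k : ℕ) : ℂ)) := by
    simp only [rcoef, Finset.sum_mul]
    rw [Finset.sum_comm]
    refine Finset.sum_congr rfl fun k _ => ?_
    rw [← hinv, Matrix.mul_apply, Finset.sum_div]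
    refine Finset.sum_congr rfl fun l _ => ?_
    simp only [vand, Matrix.of_apply]
    ring
  rw [this, Finset.sum_eq_single j]
  · simp [hne]
  · intro k _ hk
    simp [Matrix.one_apply_ne hk]
  · intro h0
    exact absurd (Finset.mem_Ioi.2 (Fin.pos_of_ne_zero hj)) h0

lemma algebraic (p q : ℕ) (hn : 2 ≤ p + q) (heven : Even (p + q))
    (g : Fin (p + q) → Matrix (Fin (2 ^ ((p + q) / 2))) (Fin (2 ^ ((p + q) / 2))) ℂ)
    (hg : CliffRel p q _ g)
    (C : Matrix (Fin (2 ^ ((p + q) / 2))) (Fin (2 ^ ((p + q) / 2))) ℂ) (hC : C.trace = 0) :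
    C = ∑ l : Fin (p + q + 1), rcoef (p + q) l •
      (gencon p q _ g)^[(l : ℕ)] (((p + q : ℕ) : ℂ) • C - gencon p q _ g C) := by
  have : NeZero (2 ^ ((p + q) / 2)) := ⟨by positivity⟩
  set F : Module.End ℂ (Matrix (Fin (2 ^ ((p + q) / 2))) (Fin (2 ^ ((p + q) / 2))) ℂ) :=
    ∑ a, T g a with hF
  have hfun : gencon p q _ g = ⇑F := funext fun U => gencon_eq U
  rw [hfun]
  simp only [← Module.End.pow_apply]
  -- the total operator
  let R : Module.End ℂ (Matrix (Fin (2 ^ ((p + q) / 2))) (Fin (2 ^ ((p + q) / 2))) ℂ) :=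
    (∑ l : Fin (p + q + 1), rcoef (p + q) l • F ^ (l : ℕ)) *
      (((p + q : ℕ) : ℂ) • 1 - F)
  have hR : ∀ U, R U = ∑ l : Fin (p + q + 1), rcoef (p + q) l •
      (F ^ (l : ℕ)) (((p + q : ℕ) : ℂ) • U - F U) := by
    intro U
    simp only [R, Module.End.mul_apply, LinearMap.sum_apply, LinearMap.smul_apply,
      LinearMap.sub_apply, Module.End.one_apply]
  rw [← hR]
  have hRmon : ∀ S, S ≠ ∅ → R (mon g S) = mon g S := by
    intro S hS
    have hcard : S.card < p + q + 1 := by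
      have := Finset.card_le_univ S
      simp at this; omega
    have hpow : ∀ l : ℕ, (F ^ l) (mon g S) = (lam (p + q) S.card : ℂ) ^ l • mon g S := by
      intro l
      induction l with
      | zero => simp
      | succ l ih => rw [pow_succ', Module.End.mul_apply, ih, map_smul, gencon_mon hg, smul_smul,
          pow_succ]
    have key := rcoef_sum (p + q) heven ⟨S.card, hcard⟩
      (by intro h0; exact hS (Finset.card_eq_zero.1 (by simpa using congrArg Fin.val h0)))
    rw [hR, gencon_mon hg, ← sub_smul]
    simp only [map_smul, hpow, smul_smul]
    rw [← Finset.sum_smul]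
    conv_rhs => rw [← one_smul ℂ (mon g S), ← key, Finset.sum_mul]
    congr 1
    refine Finset.sum_congr rfl fun l _ => ?_
    simp only
    ring
  have hspan := (mon_linInd hn heven hg).span_eq_top_of_card_eq_finrank' (by
    obtain ⟨m, hm⟩ := heven
    rw [Module.finrank_matrix]
    simp only [Fintype.card_finset, Fintype.card_fin, Module.finrank_self, mul_one]
    rw [← pow_add]; congr 1; omega)
  have hmem : C ∈ Submodule.span ℂ (Set.range (mon g)) := hspan ▸ Submodule.mem_top
  obtain ⟨c, hc⟩ := (Submodule.mem_span_range_iff_exists_fun ℂ).1 hmem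
  have hc0 : c ∅ = 0 := by
    rw [← hc, Matrix.trace_sum, Finset.sum_eq_single ∅] at hC
    · rw [Matrix.trace_smul] at hC
      simpa [mon] using hC
    · intro S _ hS
      rw [Matrix.trace_smul, mon_trace hn heven hg S hS, smul_zero]
    · simp
  rw [← hc, map_sum]
  refine Finset.sum_congr rfl fun S _ => ?_
  by_cases hS : S = ∅
  · rw [hS, hc0]; simp
  · rw [map_smul, hRmon S hS]

end PrimAux

/-- for even n = p + q ≥ 2 and N = 2^{n/2}, any traceless
solution C_μ of the primitive field equation ∂_μ h_ρ − [C_μ, h_ρ] = 0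
(with h_ρ = η_{ρρ} h^ρ) is given by the explicit formula
C_μ = Σ_l r_l F^l(Σ_ρ η_{ρρ} (∂_μ h^ρ) h^ρ). -/
theorem uniqueness_of_primitive_equation_solution_even
    (p q : ℕ) (hn : 2 ≤ p + q) (heven : Even (p + q))
    (h C : Fin (p + q) → (Fin (p + q) → ℝ) →
      Matrix (Fin (2 ^ ((p + q) / 2))) (Fin (2 ^ ((p + q) / 2))) ℂ)
    (hdiff : ∀ μ, ContDiff ℝ 1 (h μ))
    (hcl : ∀ x, CliffRel p q (2 ^ ((p + q) / 2)) (fun μ => h μ x))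
    (hCtr : ∀ μ x, (C μ x).trace = 0)
    (hprim : ∀ μ ρ x,
      pder μ (fun y => etaC p q ρ • h ρ y) x -
        (C μ x * (etaC p q ρ • h ρ x) - (etaC p q ρ • h ρ x) * C μ x) = 0) :
    ∀ μ x, C μ x = Cformula p q (2 ^ ((p + q) / 2)) h μ x := by
  intro μ x
  have hd : ∀ ρ, pder μ (h ρ) x = C μ x * h ρ x - h ρ x * C μ x := by
    intro ρ
    have h1 := hprim μ ρ x
    have hdf : DifferentiableAt ℝ (h ρ) x := (hdiff ρ).differentiable one_ne_zero x
    have h2 : pder μ (fun y => etaC p q ρ • h ρ y) x = etaC p q ρ • pder μ (h ρ) x := by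
      unfold pder
      unfold etaC
      split_ifs
      · simp only [one_smul]
      · simp only [neg_smul, one_smul]
        exact DFunLike.congr_fun (fderiv_fun_neg (𝕜 := ℝ) (f := h ρ) (x := x)) (Pi.single μ 1)
    rw [h2, mul_smul_comm, smul_mul_assoc, ← smul_sub, ← smul_sub] at h1
    have hne : etaC p q ρ ≠ 0 := left_ne_zero_of_mul_eq_one (PrimAux.etaC_sq p q ρ)
    exact sub_eq_zero.1 ((smul_eq_zero.1 h1).resolve_left hne)
  have hW : Wfun p q (2 ^ ((p + q) / 2)) h μ x =
      ((p + q : ℕ) : ℂ) • C μ x - gencon p q _ (fun a => h a x) (C μ x) := by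
    unfold Wfun gencon
    have : ∀ ρ, etaC p q ρ • (pder μ (h ρ) x * h ρ x) =
        C μ x - etaC p q ρ • (h ρ x * C μ x * h ρ x) := by
      intro ρ
      have hs : h ρ x * h ρ x = etaC p q ρ • 1 := PrimAux.g_sq (hcl x) ρ
      rw [hd, sub_mul, smul_sub, mul_assoc, hs, mul_smul_comm, smul_smul, PrimAux.etaC_sq,
        one_smul, mul_one]
    simp only [this]
    rw [Finset.sum_sub_distrib, Finset.sum_const, Finset.card_univ, Fintype.card_fin,
      Nat.cast_smul_eq_nsmul]
  unfold Cformula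
  rw [hW]
  exact PrimAux.algebraic p q hn heven (fun a => h a x) (hcl x) (C μ x) (hCtr μ x)
end
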